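/- There do not exist a matrix M ∈ S(G125) and real numbers λ_1 < λ_2 < λ_3 such that the characteristic polynomial of M equals (X − λ_1) (X − λ_2)^3 (X − λ_3)^2, and there do not exist such M and λ_1 < λ_2 < λ_3 with characteristic polynomial (X − λ_1)^2 (X − λ_2)^3 (X − λ_3). That is, G125 attains neither ordered multiplicity list (1,3,2) nor (2,3,1). -/

import Mathlib

/-!
Both multiplicity lists say that the symmetric matrix `M` has a simple eigenvalue `a` and only two
other eigenvalues `b`, `c`. By the spectral theorem `N = (M - b) (M - c)` then has rank at most
one, so `N i j = d * w i * w j` (`exists_rank_one`).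

This contradicts the pattern of `G125` (`G125_no_rank_one`). Vertices 1 and 3 are joined by exactly
one path of length two, so `N₁₃ ≠ 0`; vertices 1 and 5 (or 6) are at distance three, so `N₁₅ = 0`
and `w₅ = w₆ = 0`. Hence rows 5 and 6 of `N` vanish, which makes the block of `M` joining `{3, 4}`
to `{5, 6}` a multiple of an orthogonal matrix and gives `(M₃₃ - b) (M₃₃ - c) = -k`, where `k > 0`
is the common squared length of the rows and columns of that block. Then `N₃₃ = M₂₃ ^ 2`, and
comparing `N₁₁` with `N₁₃` gives `(M₁₁ - b) (M₁₁ - c) = 0`, while comparing `N₁₂` with `N₂₃`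
gives `M₁₁ = M₃₃`: a contradiction. (Vertex `v` has index `v - 1` in the code.)
-/

open Polynomial Matrix

/-- `M ∈ S(G)`: real symmetric matrix whose off-diagonal nonzero pattern is
given exactly by the adjacency of `G`. -/
def inS {V : Type*} (G : SimpleGraph V) (M : Matrix V V ℝ) : Prop :=
  M.IsSymm ∧ ∀ i j : V, i ≠ j → (M i j ≠ 0 ↔ G.Adj i j)

/-- The graph `G125` on vertices 1..6 (encoded as `Fin 6`, vertex `v` is `v.val + 1`). -/
def G125 : SimpleGraph (Fin 6) :=
  SimpleGraph.fromRel (fun i j =>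
    ((i : ℕ) + 1, (j : ℕ) + 1) ∈ [(1, 2), (2, 3), (2, 4), (3, 5), (3, 6), (4, 5), (4, 6)])

/-- If `a` is a simple eigenvalue of the symmetric matrix `M`, and `b`, `c` are its only other
eigenvalues, then `(M - b) (M - c)` has the form `d • w wᵀ`. -/
lemma exists_rank_one (M : Matrix (Fin 6) (Fin 6) ℝ) (hM : M.IsSymm) (a b c : ℝ)
    (hab : a ≠ b) (hac : a ≠ c)
    (h : M.charpoly = (X - C a) * (X - C b) ^ 3 * (X - C c) ^ 2) :
    ∃ (d : ℝ) (w : Fin 6 → ℝ), ∀ i j,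
      ((M - b • (1 : Matrix (Fin 6) (Fin 6) ℝ)) * (M - c • (1 : Matrix (Fin 6) (Fin 6) ℝ))) i j
        = d * w i * w j := by
  have hH : M.IsHermitian := by
    rw [Matrix.IsHermitian, Matrix.conjTranspose_eq_transpose_of_trivial]; exact hM
  have hr : M.charpoly.roots = a ::ₘ (3 • {b} + 2 • {c}) := by
    have h0 : (X - C a) * (X - C b) ^ 3 * (X - C c) ^ 2 ≠ 0 := by
      rw [← h]; exact (Matrix.charpoly_monic M).ne_zero
    rw [h, roots_mul h0, roots_mul (left_ne_zero_of_mul h0), roots_pow, roots_pow,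
      roots_X_sub_C, roots_X_sub_C, roots_X_sub_C]
    simp
  have he := hH.roots_charpoly_eq_eigenvalues
  rw [hr] at he
  have hmem : ∀ i, hH.eigenvalues i = a ∨ hH.eigenvalues i = b ∨ hH.eigenvalues i = c := by
    intro i
    have : hH.eigenvalues i ∈ a ::ₘ (3 • {b} + 2 • {c} : Multiset ℝ) := by
      rw [he]; exact Multiset.mem_map.2 ⟨i, by simp, rfl⟩
    simpa [Multiset.mem_nsmul] using this
  have hcard : (Finset.univ.filter fun i => a = hH.eigenvalues i).card = 1 := by
    have h1 := congrArg (Multiset.count a) he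
    rw [Multiset.count_map] at h1
    simp [hab, hac] at h1
    rw [Finset.card_def, Finset.filter_val]
    exact h1.symm
  obtain ⟨k, hk⟩ := Finset.card_eq_one.mp hcard
  have hk' : ∀ i, i ≠ k → (hH.eigenvalues i - b) * (hH.eigenvalues i - c) = 0 := by
    intro i hi
    have : ¬ a = hH.eigenvalues i := by
      intro h2
      have : i ∈ (Finset.univ.filter fun i => a = hH.eigenvalues i) := by simpa using h2
      rw [hk] at this
      exact hi (by simpa using this)
    rcases hmem i with h2 | h2 | h2
    · exact absurd h2.symm this
    · rw [h2]; ring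
    · rw [h2]; ring
  set U : Matrix (Fin 6) (Fin 6) ℝ := (hH.eigenvectorUnitary : Matrix (Fin 6) (Fin 6) ℝ) with hU
  have hUU : star U * U = 1 := by simp [hU]
  have hUU' : U * star U = 1 := by simp [hU]
  have hs : M = U * Matrix.diagonal hH.eigenvalues * star U := by
    have := hH.spectral_theorem
    simpa [Unitary.conjStarAlgAut_apply, Function.comp_def] using this
  have hsub : ∀ t : ℝ, M - t • (1 : Matrix (Fin 6) (Fin 6) ℝ)
      = U * Matrix.diagonal (fun i => hH.eigenvalues i - t) * star U := by
    intro t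
    have : (Matrix.diagonal (fun i => hH.eigenvalues i - t) : Matrix (Fin 6) (Fin 6) ℝ)
        = Matrix.diagonal hH.eigenvalues - t • 1 := by
      rw [← Matrix.diagonal_one, ← Matrix.diagonal_smul, Matrix.diagonal_sub]
      simp
    rw [this, mul_sub, sub_mul, ← hs]
    simp [hUU']
  refine ⟨(hH.eigenvalues k - b) * (hH.eigenvalues k - c), fun i => U i k, fun i j => ?_⟩
  have hN : (M - b • (1 : Matrix (Fin 6) (Fin 6) ℝ)) * (M - c • (1 : Matrix (Fin 6) (Fin 6) ℝ))
      = U * Matrix.diagonal (fun i => (hH.eigenvalues i - b) * (hH.eigenvalues i - c))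
        * star U := by
    rw [hsub, hsub, ← Matrix.diagonal_mul_diagonal]
    calc _ = U * Matrix.diagonal (fun i => hH.eigenvalues i - b) * (star U * U)
          * Matrix.diagonal (fun i => hH.eigenvalues i - c) * star U := by
            simp only [Matrix.mul_assoc]
      _ = _ := by rw [hUU]; simp only [Matrix.mul_assoc, Matrix.mul_one]
  rw [hN, Matrix.mul_apply, Finset.sum_eq_single k]
  · rw [Matrix.mul_diagonal, Matrix.star_apply]
    simp only [star_trivial]; ring
  · intro l _ hl
    rw [Matrix.mul_diagonal, hk' l hl]; simp
  · simp

/-- For `M ∈ S(G125)`, the product `(M - b) (M - c)` is never of the form `d • w wᵀ`. -/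
lemma G125_no_rank_one (M : Matrix (Fin 6) (Fin 6) ℝ) (hM : inS G125 M) (b c d : ℝ)
    (w : Fin 6 → ℝ)
    (h : ∀ i j, ((M - b • (1 : Matrix (Fin 6) (Fin 6) ℝ)) *
      (M - c • (1 : Matrix (Fin 6) (Fin 6) ℝ))) i j = d * w i * w j) : False := by
  obtain ⟨hs, hadj⟩ := hM
  have sy : ∀ i j, M j i = M i j := fun i j => hs.apply i j
  have z : ∀ i j : Fin 6, i ≠ j → ¬ G125.Adj i j → M i j = 0 := fun i j hij hn => by
    by_contra h0; exact hn ((hadj i j hij).1 h0)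
  have z02 : M 0 2 = 0 := z _ _ (by decide) (by simp [G125])
  have z03 : M 0 3 = 0 := z _ _ (by decide) (by simp [G125])
  have z04 : M 0 4 = 0 := z _ _ (by decide) (by simp [G125])
  have z05 : M 0 5 = 0 := z _ _ (by decide) (by simp [G125])
  have z14 : M 1 4 = 0 := z _ _ (by decide) (by simp [G125])
  have z15 : M 1 5 = 0 := z _ _ (by decide) (by simp [G125])
  have z23 : M 2 3 = 0 := z _ _ (by decide) (by simp [G125])
  have z45 : M 4 5 = 0 := z _ _ (by decide) (by simp [G125])
  have n01 : M 0 1 ≠ 0 := (hadj _ _ (by decide)).2 (by simp [G125])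
  have n12 : M 1 2 ≠ 0 := (hadj _ _ (by decide)).2 (by simp [G125])
  have n24 : M 2 4 ≠ 0 := (hadj _ _ (by decide)).2 (by simp [G125])
  have n25 : M 2 5 ≠ 0 := (hadj _ _ (by decide)).2 (by simp [G125])
  have e : ∀ i j, (∑ k, (M i k - b * (1 : Matrix (Fin 6) (Fin 6) ℝ) i k) *
      (M k j - c * (1 : Matrix (Fin 6) (Fin 6) ℝ) k j)) = d * w i * w j := fun i j => by
    rw [← h i j, Matrix.mul_apply]; rfl
  have e00 := e 0 0
  have e01 := e 0 1
  have e02 := e 0 2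
  have e04 := e 0 4
  have e05 := e 0 5
  have e12 := e 1 2
  have e22 := e 2 2
  have e24 := e 2 4
  have e25 := e 2 5
  have e44 := e 4 4
  have e45 := e 4 5
  have e55 := e 5 5
  simp [Fin.sum_univ_six, Matrix.one_apply, sy 0 1, sy 0 2, sy 0 3, sy 0 4, sy 0 5, sy 1 2,
    sy 1 3, sy 1 4, sy 1 5, sy 2 3, sy 2 4, sy 2 5, sy 3 4, sy 3 5, sy 4 5,
    z02, z03, z04, z05, z14, z15, z23, z45, -mul_eq_zero, -zero_eq_mul, -mul_eq_mul_left_iff,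
    -mul_eq_mul_right_iff] at e00 e01 e02 e04 e05 e12 e22 e24 e25 e44 e45 e55
  clear h e z hadj hs sy
  generalize M 0 0 = a1 at *
  generalize M 1 1 = a2 at *
  generalize M 2 2 = a3 at *
  generalize M 4 4 = a5 at *
  generalize M 5 5 = a6 at *
  generalize M 0 1 = x at *
  generalize M 1 2 = p at *
  generalize M 2 4 = r at *
  generalize M 2 5 = s at *
  generalize M 3 4 = t at *
  generalize M 3 5 = u at *
  -- Below, `a1, a2, a3, a5, a6` are diagonal entries (indexed by vertex), `x, p` the entries on the
  -- edges 12, 23, and `!![r, s; t, u]` is the block joining {3, 4} to {5, 6}.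
  have hdw : d * w 0 * w 2 ≠ 0 := by rw [← e02]; exact mul_ne_zero n01 n12
  have hd0 : d * w 0 ≠ 0 := left_ne_zero_of_mul hdw
  have hw0 : w 0 ≠ 0 := right_ne_zero_of_mul hd0
  have w4 : w 4 = 0 := by
    rcases mul_eq_zero.1 e04.symm with h | h
    · exact absurd h hd0
    · exact h
  have w5 : w 5 = 0 := by
    rcases mul_eq_zero.1 e05.symm with h | h
    · exact absurd h hd0
    · exact h
  rw [w4] at e24 e44
  rw [w5] at e25 e45 e55
  have ha5 : a5 = b + c - a3 := by
    apply mul_left_cancel₀ n24; linear_combination e24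
  have ha6 : a6 = b + c - a3 := by
    apply mul_left_cancel₀ n25; linear_combination e25
  subst ha5 ha6
  have hpos : 0 < r ^ 2 + t ^ 2 := by positivity
  -- The rows (r, t) and (s, u) of the block joining {5, 6} to {3, 4} are orthogonal and of equal
  -- length, so its column (r, s) has that length too.
  have hst : s ^ 2 = t ^ 2 := by
    apply mul_left_cancel₀ hpos.ne'
    linear_combination (r * s - t * u) * e45 - t ^ 2 * e44 + t ^ 2 * e55
  have hp : p ^ 2 = d * w 2 ^ 2 := by
    linear_combination e22 - e44 - hst
  have hxw : x * w 2 = w 0 * p := by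
    apply mul_left_cancel₀ n12
    linear_combination w 2 * e02 - w 0 * hp
  have hx : x ^ 2 = d * w 0 ^ 2 := by
    have h1 : p * (x ^ 2 - d * w 0 ^ 2) = 0 := by
      linear_combination x * e02 + d * w 0 * hxw
    have := (mul_eq_zero.1 h1).resolve_left n12
    linarith
  have h13 : a1 = a3 := by
    apply mul_left_cancel₀ (mul_ne_zero hw0 n12)
    linear_combination w 2 * e01 - w 0 * e12 - (a1 + a2 - b - c) * hxw
  subst h13
  nlinarith

theorem G125_not_132_231 :
    (¬ ∃ (M : Matrix (Fin 6) (Fin 6) ℝ) (l₁ l₂ l₃ : ℝ),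
        inS G125 M ∧ l₁ < l₂ ∧ l₂ < l₃ ∧
        M.charpoly = (X - C l₁) * (X - C l₂) ^ 3 * (X - C l₃) ^ 2) ∧
    (¬ ∃ (M : Matrix (Fin 6) (Fin 6) ℝ) (l₁ l₂ l₃ : ℝ),
        inS G125 M ∧ l₁ < l₂ ∧ l₂ < l₃ ∧
        M.charpoly = (X - C l₁) ^ 2 * (X - C l₂) ^ 3 * (X - C l₃)) := by
  constructor
  · rintro ⟨M, l₁, l₂, l₃, hM, h12, h23, h⟩
    obtain ⟨d, w, hw⟩ := exists_rank_one M hM.1 l₁ l₂ l₃ h12.ne (h12.trans h23).ne h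
    exact G125_no_rank_one M hM l₂ l₃ d w hw
  · rintro ⟨M, l₁, l₂, l₃, hM, h12, h23, h⟩
    obtain ⟨d, w, hw⟩ := exists_rank_one M hM.1 l₃ l₂ l₁ h23.ne' (h12.trans h23).ne'
      (by rw [h]; ring)
    exact G125_no_rank_one M hM l₂ l₁ d w hw
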